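/- The function h attains its maximum over the box [−π/2, π/2]⁴ and this maximum equals (3/28)·√(3/2); moreover the maximum is attained at λ₁ = −π/4 and λ₂ = λ₃ = λ₄ = (1/2)·arcsin((√6 − 2)/2). -/

import Mathlib

open Real

/-- `f(λ) = 1/2 − (1/2)·sin(2λ)`. -/
noncomputable def ff (l : ℝ) : ℝ := 1 / 2 - (1 / 2) * sin (2 * l)

/-- The function `h(λ₁,λ₂,λ₃,λ₄) = (1/7)(f₁g₁ + f₂g₂ + f₃g₃ + f₄g₄ − f₁f₂f₃f₄)`. -/
noncomputable def hh (l1 l2 l3 l4 : ℝ) : ℝ :=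
  (1 / 7) *
    (ff l1 * (cos l2 ^ 2 * cos l3 ^ 2 * cos l4 ^ 2 + sin l2 ^ 2 * sin l3 ^ 2 * sin l4 ^ 2) +
     ff l2 * (sin l1 ^ 2 * sin l3 ^ 2 * cos l4 ^ 2 + cos l1 ^ 2 * cos l3 ^ 2 * sin l4 ^ 2) +
     ff l3 * (sin l1 ^ 2 * sin l4 ^ 2 * cos l2 ^ 2 + cos l1 ^ 2 * cos l4 ^ 2 * sin l2 ^ 2) +
     ff l4 * (sin l1 ^ 2 * sin l2 ^ 2 * cos l3 ^ 2 + cos l1 ^ 2 * cos l2 ^ 2 * sin l3 ^ 2) -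
     ff l1 * ff l2 * ff l3 * ff l4)

/-- `56 h` in the variables `y = 1 - sin 2λ`, `c = cos 2λ`. -/
noncomputable def FF (y1 y2 y3 y4 c1 c2 c3 c4 : ℝ) : ℝ :=
  y1 + y2 + y3 + y4 + c2*c3*(y1-y4) + c2*c4*(y1-y3) + c3*c4*(y1-y2)
    + c1*c3*(y2-y4) + c1*c4*(y3-y2) + c1*c2*(y4-y3) - y1*y2*y3*y4/2

lemma uni (s y : ℝ) (hs : s^2 = 6) (hs0 : 0 ≤ s) (hy2 : y ≤ 2) :
    2 + 15*y - 12*y^2 + 2*y^3 ≤ 3*s := by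
  have h : 3*s - (2 + 15*y - 12*y^2 + 2*y^3) = 2*(y-(2-s/2))^2*((2-y)+s) := by
    linear_combination (-(s/2) - (3/2) * y + 3) * hs
  have : 0 ≤ 2*(y-(2-s/2))^2*((2-y)+s) := by
    have : 0 ≤ 2 - y := by linarith
    positivity
  linarith

lemma three (s x y z : ℝ) (hs : s^2 = 6) (hs0 : 0 ≤ s) (hs1 : 2.44 ≤ s)
    (hz : 0 ≤ z) (hzy : z ≤ y) (hyx : y ≤ x) (hx : x ≤ 2) :
    2 + 5*(x+y+z) - 2*(x+y+z)^2 + 2*(x*y+y*z+z*x) + (x+y+z)*(x*y+y*z+z*x)/2 - 5/2*(x*y*z)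
      ≤ 3*s := by
  have schur : 0 ≤ (x+y+z)^3 - 4*(x+y+z)*(x*y+y*z+z*x) + 9*(x*y*z) := by
    have e : (x+y+z)^3 - 4*(x+y+z)*(x*y+y*z+z*x) + 9*(x*y*z)
        = (x-y)^2*(x+y-z) + z*((x-z)*(y-z)) := by ring
    rw [e]
    have h1 : 0 ≤ x + y - z := by linarith
    have h2 : 0 ≤ x - z := by linarith
    have h3 : 0 ≤ y - z := by linarith
    positivity
  have he3 : 0 ≤ x*y*z := by
    have : 0 ≤ y := by linarith
    have : 0 ≤ x := by linarith
    positivity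
  have he2 : 3*(x*y+y*z+z*x) ≤ (x+y+z)^2 := by
    nlinarith [sq_nonneg (x-y), sq_nonneg (y-z), sq_nonneg (x-z)]
  have ha0 : 0 ≤ x+y+z := by linarith
  have ha6 : x+y+z ≤ 6 := by linarith
  generalize x*y*z = e3 at *
  generalize x*y+y*z+z*x = e2 at *
  generalize x+y+z = a at *
  rcases le_total a (36/11) with h | h
  · have u := uni s (a/3) hs hs0 (by linarith)
    have := mul_nonneg (sub_nonneg.2 he2) (sub_nonneg.2 h)
    nlinarith
  · have k : 2 + 5*a - 3/2*a^2 + a^3/8 ≤ 7.3 := by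
      nlinarith [mul_nonneg (sub_nonneg.2 h) (sub_nonneg.2 ha6), mul_nonneg (mul_nonneg (sub_nonneg.2 h) (sub_nonneg.2 ha6)) ha0]
    rcases le_total e2 (a^2/4) with g | g
    · nlinarith [mul_nonneg (sub_nonneg.2 g) ha0]
    · nlinarith [mul_nonneg (sub_nonneg.2 g) (sub_nonneg.2 h)]

lemma low (t y z : ℝ) (hz : 0 ≤ z) (hzy : z ≤ y) (hyt : y ≤ t) (ht : t ≤ 2) :
    2*t + (y+z) - t^2*y*z/2 + (t-(y+z)/2)*(4-t^2) + (t-z)/2*(y*(2-y)) + (t-y)/2*(z*(2-z)) ≤ 7.3 := by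
  have ht0 : 0 ≤ t := by linarith
  have a1 : (t-z)/2*(y*(2-y)) ≤ (t-z)/2 := by
    nlinarith [mul_nonneg (show 0 ≤ t - z by linarith) (sq_nonneg (y-1))]
  have a2 : (t-y)/2*(z*(2-z)) ≤ (t-y)/2 := by
    nlinarith [mul_nonneg (show 0 ≤ t - y by linarith) (sq_nonneg (z-1))]
  have key : 2*t + (y+z) - t^2*y*z/2 + (t-(y+z)/2)*(5-t^2) ≤ 7.3 := by
    rcases eq_or_lt_of_le ht0 with h0 | h0
    · have : y = 0 := by linarith
      have : z = 0 := by linarith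
      subst_vars; norm_num
    have b0 : 7*t - t^3 ≤ 7.3 := by nlinarith [mul_nonneg ht0 (sq_nonneg (t-1.53)), sq_nonneg (t-1.53)]
    have b1 : 11/2*t - t^3/2 ≤ 7.3 := by nlinarith [mul_nonneg ht0 (sq_nonneg (t-1.91)), sq_nonneg (t-1.91)]
    have b2 : 4*t - t^4/2 ≤ 7.3 := by nlinarith [sq_nonneg (t^2-1.6), sq_nonneg (t-1.26)]
    have hy0 : 0 ≤ y := by linarith
    have m0 := mul_nonneg (mul_nonneg (sub_nonneg.2 hyt) (show 0 ≤ t - z by linarith)) (sub_nonneg.2 b0)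
    have m1 := mul_nonneg (mul_nonneg (sub_nonneg.2 hyt) hz) (sub_nonneg.2 b1)
    have m2 := mul_nonneg (mul_nonneg hy0 (show 0 ≤ t - z by linarith)) (sub_nonneg.2 b1)
    have m3 := mul_nonneg (mul_nonneg hy0 hz) (sub_nonneg.2 b2)
    have : 0 ≤ t^2*(7.3 - (2*t + (y+z) - t^2*y*z/2 + (t-(y+z)/2)*(5-t^2))) := by
      linarith
    have := nonneg_of_mul_nonneg_right this (by positivity)
    linarith
  linarith

lemma main0 (s y1 y2 y3 y4 c1 c2 c3 c4 : ℝ) (hs : s^2 = 6) (hs0 : 0 ≤ s) (hs1 : 2.44 ≤ s)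
    (h1 : c1^2 = y1*(2-y1)) (h2 : c2^2 = y2*(2-y2)) (h3 : c3^2 = y3*(2-y3)) (h4 : c4^2 = y4*(2-y4))
    (k1 : y1 ≤ 2) (k4 : 0 ≤ y4) (o1 : y2 ≤ y1) (o2 : y3 ≤ y2) (o3 : y4 ≤ y3) :
    FF y1 y2 y3 y4 c1 c2 c3 c4 ≤ 3*s := by
  have q : FF y1 y2 y3 y4 c1 c2 c3 c4 ≤ y1+y2+y3+y4 - y1*y2*y3*y4/2 + (y2-(y3+y4)/2)*c1^2
      + (y1-(y3+y4)/2)*c2^2 + (y1-(y2+y4)/2)*c3^2 + (y1-(y2+y3)/2)*c4^2 := by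
    unfold FF
    have p1 := mul_nonneg (sub_nonneg.2 o1) (add_nonneg (add_nonneg (sq_nonneg (c2-c3)) (sq_nonneg (c2-c4))) (sq_nonneg (c3-c4)))
    have p2 := mul_nonneg (sub_nonneg.2 o2) (add_nonneg (sq_nonneg (c1-(c3-c4)/2)) (sq_nonneg ((c3-c2)-(c3-c4)/2)))
    have p3 := mul_nonneg (sub_nonneg.2 o3) (sq_nonneg (c3-c2-c1))
    linarith
  refine q.trans ?_
  rw [h2, h3, h4]
  have hw : (y2-(y3+y4)/2)*c1^2 ≤ (y2-(y3+y4)/2)*(4-2*y1) := by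
    apply mul_le_mul_of_nonneg_left _ (by linarith)
    nlinarith [sq_nonneg (2-y1)]
  have A := three s y2 y3 y4 hs hs0 hs1 k4 o3 o2 (by linarith)
  have B := low y2 y3 y4 k4 o3 o2 (by linarith)
  rcases eq_or_lt_of_le (o1.trans k1) with e | e
  · have : y1 = 2 := by linarith
    subst this
    subst e
    linarith
  · have B' := B.trans (show (7.3:ℝ) ≤ 3*s by linarith)
    have m1 := mul_nonneg (sub_nonneg.2 o1) (sub_nonneg.2 A)
    have m2 := mul_nonneg (sub_nonneg.2 k1) (sub_nonneg.2 B')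
    have : 0 ≤ (2-y2)*(3*s - (y1+y2+y3+y4 - y1*y2*y3*y4/2 + (y2-(y3+y4)/2)*(4-2*y1)
      + (y1-(y3+y4)/2)*(y2*(2-y2)) + (y1-(y2+y4)/2)*(y3*(2-y3)) + (y1-(y2+y3)/2)*(y4*(2-y4)))) := by
      linarith
    have := nonneg_of_mul_nonneg_right this (by linarith)
    linarith

lemma s34 (y1 y2 y3 y4 c1 c2 c3 c4 : ℝ) :
    FF y1 y2 y3 y4 c1 c2 c3 c4 = FF y1 y2 y4 y3 (-c1) c2 c4 c3 := by unfold FF; ring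
lemma s23 (y1 y2 y3 y4 c1 c2 c3 c4 : ℝ) :
    FF y1 y2 y3 y4 c1 c2 c3 c4 = FF y1 y3 y2 y4 (-c1) c3 c2 c4 := by unfold FF; ring
lemma s12 (y1 y2 y3 y4 c1 c2 c3 c4 : ℝ) :
    FF y1 y2 y3 y4 c1 c2 c3 c4 = FF y2 y1 y3 y4 c2 c1 c3 (-c4) := by unfold FF; ring

/-- Points allowed for `(y, c)`. -/
def OK (y c : ℝ) : Prop := c^2 = y*(2-y) ∧ 0 ≤ y ∧ y ≤ 2

lemma OK.neg {y c : ℝ} (h : OK y c) : OK y (-c) := ⟨by rw [neg_sq]; exact h.1, h.2⟩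

lemma main1 (s y1 y2 y3 y4 c1 c2 c3 c4 : ℝ) (hs : s^2 = 6) (hs0 : 0 ≤ s) (hs1 : 2.44 ≤ s)
    (h1 : OK y1 c1) (h2 : OK y2 c2) (h3 : OK y3 c3) (h4 : OK y4 c4)
    (o1 : y2 ≤ y1) (o2 : y3 ≤ y2) (o3 : y4 ≤ y2) :
    FF y1 y2 y3 y4 c1 c2 c3 c4 ≤ 3*s := by
  rcases le_total y4 y3 with h | h
  · exact main0 _ _ _ _ _ _ _ _ _ hs hs0 hs1 h1.1 h2.1 h3.1 h4.1 h1.2.2 h4.2.1 o1 o2 h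
  · rw [s34]
    exact main0 _ _ _ _ _ _ _ _ _ hs hs0 hs1 h1.neg.1 h2.1 h4.1 h3.1 h1.2.2 h3.2.1 o1 o3 h

lemma main2 (s y1 y2 y3 y4 c1 c2 c3 c4 : ℝ) (hs : s^2 = 6) (hs0 : 0 ≤ s) (hs1 : 2.44 ≤ s)
    (h1 : OK y1 c1) (h2 : OK y2 c2) (h3 : OK y3 c3) (h4 : OK y4 c4)
    (o1 : y2 ≤ y1) (o2 : y3 ≤ y1) (o3 : y4 ≤ y1) :
    FF y1 y2 y3 y4 c1 c2 c3 c4 ≤ 3*s := by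
  have aux : ∀ y2 y3 y4 c1 c2 c3 c4 : ℝ, OK y1 c1 → OK y2 c2 → OK y3 c3 → OK y4 c4 →
      y2 ≤ y1 → y3 ≤ y1 → y4 ≤ y3 → FF y1 y2 y3 y4 c1 c2 c3 c4 ≤ 3*s := by
    intro y2 y3 y4 c1 c2 c3 c4 h1 h2 h3 h4 o1 o2 o3
    rcases le_total y3 y2 with h | h
    · exact main1 _ _ _ _ _ _ _ _ _ hs hs0 hs1 h1 h2 h3 h4 o1 h (o3.trans h)
    · rw [s23]
      exact main1 _ _ _ _ _ _ _ _ _ hs hs0 hs1 h1.neg h3 h2 h4 o2 h o3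
  rcases le_total y4 y3 with h | h
  · exact aux _ _ _ _ _ _ _ h1 h2 h3 h4 o1 o2 h
  · rw [s34]
    exact aux _ _ _ _ _ _ _ h1.neg h2 h4 h3 o1 o3 h

lemma main3 (s y1 y2 y3 y4 c1 c2 c3 c4 : ℝ) (hs : s^2 = 6) (hs0 : 0 ≤ s) (hs1 : 2.44 ≤ s)
    (h1 : OK y1 c1) (h2 : OK y2 c2) (h3 : OK y3 c3) (h4 : OK y4 c4) :
    FF y1 y2 y3 y4 c1 c2 c3 c4 ≤ 3*s := by
  have aux1 : ∀ y1 y2 y3 y4 c1 c2 c3 c4 : ℝ, OK y1 c1 → OK y2 c2 → OK y3 c3 → OK y4 c4 →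
      y3 ≤ y2 → y4 ≤ y2 → FF y1 y2 y3 y4 c1 c2 c3 c4 ≤ 3*s := by
    intro y1 y2 y3 y4 c1 c2 c3 c4 h1 h2 h3 h4 o1 o2
    rcases le_total y2 y1 with h | h
    · exact main2 _ _ _ _ _ _ _ _ _ hs hs0 hs1 h1 h2 h3 h4 h (o1.trans h) (o2.trans h)
    · rw [s12]
      exact main2 _ _ _ _ _ _ _ _ _ hs hs0 hs1 h2 h1 h3 h4.neg h o1 o2
  have aux2 : ∀ y1 y2 y3 y4 c1 c2 c3 c4 : ℝ, OK y1 c1 → OK y2 c2 → OK y3 c3 → OK y4 c4 →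
      y4 ≤ y3 → FF y1 y2 y3 y4 c1 c2 c3 c4 ≤ 3*s := by
    intro y1 y2 y3 y4 c1 c2 c3 c4 h1 h2 h3 h4 o1
    rcases le_total y3 y2 with h | h
    · exact aux1 _ _ _ _ _ _ _ _ h1 h2 h3 h4 h (o1.trans h)
    · rw [s23]
      exact aux1 _ _ _ _ _ _ _ _ h1.neg h3 h2 h4 h o1
  rcases le_total y4 y3 with h | h
  · exact aux2 _ _ _ _ _ _ _ _ h1 h2 h3 h4 h
  · rw [s34]
    exact aux2 _ _ _ _ _ _ _ _ h1.neg h2 h4 h3 h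

lemma hh_eq (l1 l2 l3 l4 : ℝ) : hh l1 l2 l3 l4 =
    (1/56) * FF (1 - sin (2*l1)) (1 - sin (2*l2)) (1 - sin (2*l3)) (1 - sin (2*l4))
      (cos (2*l1)) (cos (2*l2)) (cos (2*l3)) (cos (2*l4)) := by
  unfold hh ff FF
  simp only [Real.sin_sq, Real.cos_sq]
  ring

lemma ok_trig (l : ℝ) : OK (1 - sin l) (cos l) := by
  refine ⟨?_, by linarith [sin_le_one l], by linarith [neg_one_le_sin l]⟩
  rw [Real.cos_sq']; ring

lemma sqrt_conv : Real.sqrt (3/2) = Real.sqrt 6 / 2 := by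
  rw [Real.sqrt_eq_iff_mul_self_eq (by norm_num) (by positivity)]
  nlinarith [Real.sq_sqrt (show (0:ℝ) ≤ 6 by norm_num)]

lemma value : hh (-(π / 4)) ((1 / 2) * arcsin ((Real.sqrt 6 - 2) / 2))
      ((1 / 2) * arcsin ((Real.sqrt 6 - 2) / 2)) ((1 / 2) * arcsin ((Real.sqrt 6 - 2) / 2)) =
      (3 / 28) * Real.sqrt (3 / 2) := by
  have hs := Real.sq_sqrt (show (0:ℝ) ≤ 6 by norm_num)
  have hs0 := Real.sqrt_nonneg 6
  have a : Real.sqrt 6 ≤ 4 := by nlinarith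
  rw [hh_eq, sqrt_conv]
  have e1 : 2 * (-(π/4)) = -(π/2) := by ring
  have e2 : 2 * ((1 / 2) * arcsin ((Real.sqrt 6 - 2) / 2)) = arcsin ((Real.sqrt 6 - 2) / 2) := by ring
  rw [e1, e2, Real.sin_neg, Real.cos_neg, Real.sin_pi_div_two, Real.cos_pi_div_two,
    Real.sin_arcsin (by linarith) (by linarith)]
  have hc : cos (arcsin ((Real.sqrt 6 - 2) / 2))^2 = 1 - ((Real.sqrt 6 - 2) / 2)^2 := by
    rw [Real.cos_sq', Real.sin_arcsin (by linarith) (by linarith)]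
  generalize cos (arcsin ((Real.sqrt 6 - 2) / 2)) = c at *
  generalize Real.sqrt 6 = s at *
  unfold FF
  have h3 : s^3 = 6*s := by rw [pow_succ, hs]
  ring_nf
  ring_nf at hc
  rw [hc]
  ring_nf
  rw [h3]
  ring

/-- `h` attains its maximum `(3/28)·√(3/2)` over the box `[−π/2, π/2]⁴`, and the
maximum is attained at `λ₁ = −π/4`, `λ₂ = λ₃ = λ₄ = (1/2)·arcsin((√6 − 2)/2)`. -/
theorem stmt19 :
    IsGreatest
      {r : ℝ | ∃ l1 l2 l3 l4 : ℝ,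
        l1 ∈ Set.Icc (-(π / 2)) (π / 2) ∧ l2 ∈ Set.Icc (-(π / 2)) (π / 2) ∧
        l3 ∈ Set.Icc (-(π / 2)) (π / 2) ∧ l4 ∈ Set.Icc (-(π / 2)) (π / 2) ∧
        r = hh l1 l2 l3 l4}
      ((3 / 28) * Real.sqrt (3 / 2)) ∧
    hh (-(π / 4)) ((1 / 2) * arcsin ((Real.sqrt 6 - 2) / 2))
      ((1 / 2) * arcsin ((Real.sqrt 6 - 2) / 2)) ((1 / 2) * arcsin ((Real.sqrt 6 - 2) / 2)) =
      (3 / 28) * Real.sqrt (3 / 2) := by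
  have hs := Real.sq_sqrt (show (0:ℝ) ≤ 6 by norm_num)
  have hs0 := Real.sqrt_nonneg 6
  have hs1 : 2.44 ≤ Real.sqrt 6 := Real.le_sqrt_of_sq_le (by norm_num)
  refine ⟨⟨?_, ?_⟩, value⟩
  · have m1 := Real.neg_pi_div_two_le_arcsin ((Real.sqrt 6 - 2) / 2)
    have m2 := Real.arcsin_le_pi_div_two ((Real.sqrt 6 - 2) / 2)
    have hp := Real.pi_pos
    have hm : (1 / 2) * arcsin ((Real.sqrt 6 - 2) / 2) ∈ Set.Icc (-(π / 2)) (π / 2) :=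
      ⟨by linarith, by linarith⟩
    exact ⟨_, _, _, _, ⟨by linarith, by linarith⟩, hm, hm, hm, value.symm⟩
  · rintro r ⟨l1, l2, l3, l4, -, -, -, -, rfl⟩
    rw [hh_eq, sqrt_conv]
    have := main3 (Real.sqrt 6) _ _ _ _ _ _ _ _ hs hs0 hs1 (ok_trig (2*l1)) (ok_trig (2*l2))
      (ok_trig (2*l3)) (ok_trig (2*l4))
    linarith
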